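/- arXiv:1810.05130 — 3 statements merged into one kernel-verified Lean document; each statement's English description precedes it below -/
import Mathlib

section
/- There exist absolute constants c₁ ∈ (0,1) and C₂ > 0 with the following property. Let d ≥ 1, m : Fin d → ℕ with m_j ≥ 1, G = Π_j ZMod (m_j), n = Π_j m_j, and k ≥ 1. For a real number a, let ⟨a⟩ denote the unique element of (−1/2, 1/2] with a − ⟨a⟩ ∈ ℤ. Fix x ∈ G with x ≠ 0; let x_j ∈ {0, …, m_j − 1} be the integer representative of the j-th coordinate of x, set s_*(x) = max_j ( m_j / gcd(x_j, m_j) ) (with gcd(0, m) = m), and for z ∈ G set x̄·z = Σ_j x_j·z_j / m_j ∈ ℝ, where z_j ∈ {0, …, m_j − 1} is the integer representative of the j-th coordinate of z. Let Z_1, …, Z_k be independent, each uniform on G. Then: if s_*(x) ≤ C₂·n^{1/k}, the probability that (1/k)·Σ_{i=1}^k ⟨x̄·Z_i⟩² ≤ c₁·n^{−2/k} is at most s_*(x)^{−9k/10}; and if s_*(x) > C₂·n^{1/k}, this probability is at most 2^{−k}/n. -/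
open Real
open scoped Classical

/-- The signed fractional part of `a`: the unique element of `(-1/2, 1/2]`
such that `a - sfrac a ∈ ℤ`. -/
noncomputable def sfrac (a : ℝ) : ℝ := a - ⌈a - 1/2⌉

lemma aux_geom (δ : ℝ) (hδ : 0 < δ) (M : ℕ) :
    ∑ n ∈ Finset.range M, Real.exp (-2 * δ) ^ (n + 1) ≤ 1 / (2 * δ) := by
  set q := Real.exp (-2 * δ) with hq
  have hq0 : 0 < q := Real.exp_pos _
  have hq1 : q * (1 + 2 * δ) ≤ 1 := by
    have h1 : 2 * δ + 1 ≤ Real.exp (2 * δ) := Real.add_one_le_exp _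
    have h2 : q * Real.exp (2 * δ) = 1 := by
      rw [hq, ← Real.exp_add]; simp
    nlinarith
  have key : ∀ M : ℕ, ∑ n ∈ Finset.range M, q ^ (n + 1) ≤ (1 - q ^ M) / (2 * δ) := by
    intro M
    induction M with
    | zero => simp
    | succ k ih =>
      rw [Finset.sum_range_succ]
      have h3 : q ^ (k + 1) ≤ (q ^ k - q ^ (k + 1)) / (2 * δ) := by
        rw [le_div_iff₀ (by positivity)]
        have : 0 < q ^ k := by positivity
        rw [pow_succ]
        nlinarith
      calc _ ≤ (1 - q ^ k) / (2 * δ) + (q ^ k - q ^ (k + 1)) / (2 * δ) := add_le_add ih h3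
        _ = _ := by rw [← add_div]; ring_nf
  refine (key M).trans ?_
  gcongr
  have : 0 < q ^ M := by positivity
  linarith

lemma aux_int_sum (δ : ℝ) (hδ : 0 < δ) (S : Finset ℤ) :
    ∑ r ∈ S, Real.exp (-(δ * r) ^ 2) ≤ 1 + 3 / δ := by
  obtain ⟨M, hM⟩ : ∃ M : ℕ, ∀ r ∈ S, r.natAbs ≤ M :=
    ⟨S.sup Int.natAbs, fun r hr => Finset.le_sup (f := Int.natAbs) hr⟩
  set A : Finset ℤ := (Finset.range M).image (fun n : ℕ => ((n : ℤ) + 1))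
  set B : Finset ℤ := (Finset.range M).image (fun n : ℕ => (-((n : ℤ) + 1)))
  have hsub : S ⊆ {0} ∪ (A ∪ B) := by
    intro r hr
    have := hM r hr
    simp only [A, B, Finset.mem_union, Finset.mem_singleton, Finset.mem_image, Finset.mem_range]
    rcases lt_trichotomy r 0 with h | h | h
    · right; right; exact ⟨r.natAbs - 1, by omega, by omega⟩
    · left; exact h
    · right; left; exact ⟨r.natAbs - 1, by omega, by omega⟩
  have hterm : ∀ n : ℕ, Real.exp (-(δ * ((n : ℝ) + 1)) ^ 2)
      ≤ Real.exp 1 * Real.exp (-2 * δ) ^ (n + 1) := by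
    intro n
    rw [← Real.exp_nat_mul, ← Real.exp_add]
    apply Real.exp_le_exp.mpr
    push_cast
    nlinarith [sq_nonneg (δ * ((n : ℝ) + 1) - 1)]
  have hsum : ∑ n ∈ Finset.range M, Real.exp (-(δ * ((n : ℝ) + 1)) ^ 2) ≤ Real.exp 1 * (1 / (2 * δ)) := by
    refine (Finset.sum_le_sum fun n _ => hterm n).trans ?_
    rw [← Finset.mul_sum]
    exact mul_le_mul_of_nonneg_left (aux_geom δ hδ M) (Real.exp_pos _).le
  have hA : ∑ r ∈ A, Real.exp (-(δ * (r : ℝ)) ^ 2) ≤ Real.exp 1 * (1 / (2 * δ)) := by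
    rw [Finset.sum_image (by intro a _ b _ h; simpa using h)]
    push_cast
    exact hsum
  have hB : ∑ r ∈ B, Real.exp (-(δ * (r : ℝ)) ^ 2) ≤ Real.exp 1 * (1 / (2 * δ)) := by
    rw [Finset.sum_image (by intro a _ b _ h; simpa using h)]
    refine le_trans (le_of_eq ?_) hsum
    refine Finset.sum_congr rfl fun n _ => ?_
    congr 1
    push_cast
    ring
  have hun : ∀ P Q : Finset ℤ, ∑ r ∈ P ∪ Q, Real.exp (-(δ * (r : ℝ)) ^ 2)
      ≤ ∑ r ∈ P, Real.exp (-(δ * (r : ℝ)) ^ 2) + ∑ r ∈ Q, Real.exp (-(δ * (r : ℝ)) ^ 2) := by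
    intro P Q
    rw [← Finset.sum_union_inter]
    have : 0 ≤ ∑ r ∈ P ∩ Q, Real.exp (-(δ * (r : ℝ)) ^ 2) :=
      Finset.sum_nonneg fun _ _ => (Real.exp_pos _).le
    linarith
  have h1 := Finset.sum_le_sum_of_subset_of_nonneg (f := fun r : ℤ => Real.exp (-(δ * (r : ℝ)) ^ 2))
    hsub (fun _ _ _ => (Real.exp_pos _).le)
  have h2 := hun {0} (A ∪ B)
  have h3 := hun A B
  have h4 : ∑ r ∈ ({0} : Finset ℤ), Real.exp (-(δ * (r : ℝ)) ^ 2) = 1 := by simp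
  have h5 : Real.exp 1 * (1 / (2 * δ)) ≤ 3 * (1 / (2 * δ)) := by
    gcongr
    have := Real.exp_one_lt_d9
    linarith
  have h6 : 3 / δ = 3 * (1 / (2 * δ)) + 3 * (1 / (2 * δ)) := by field_simp; norm_num
  linarith

lemma sfrac_add_int (a : ℝ) (z : ℤ) : sfrac (a + z) = sfrac a := by
  unfold sfrac
  have : a + z - 1 / 2 = (a - 1 / 2) + (z : ℤ) := by ring
  rw [this, Int.ceil_add_intCast]
  push_cast
  ring

lemma aux_shift (v : ℝ) (p s : ℕ) (hs : 0 < s) (hps : Nat.Coprime p s) (t : ℝ) (ht : 0 < t) :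
    ∑ a ∈ Finset.range s, Real.exp (-(t * sfrac (v + (a : ℝ) * p / s)) ^ 2) ≤ 1 + 6 * s / t := by
  have hs' : (0 : ℝ) < s := by exact_mod_cast hs
  set r : ℕ → ℤ := fun a => round (s * v) + a * p - s * ⌈v + (a : ℝ) * p / s - 1 / 2⌉ with hr
  have heq : ∀ a : ℕ, (s : ℝ) * sfrac (v + (a : ℝ) * p / s) = (s * v - round (s * v)) + r a := by
    intro a
    simp only [hr, sfrac]
    push_cast
    field_simp
    ring
  have hinj : Set.InjOn r (Finset.range s : Set ℕ) := by
    intro a ha b hb hab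
    simp only [Finset.coe_range, Set.mem_Iio] at ha hb
    simp only [hr] at hab
    have h1 : (s : ℤ) ∣ ((a : ℤ) - b) * p := by
      refine ⟨⌈v + (a : ℝ) * p / s - 1 / 2⌉ - ⌈v + (b : ℝ) * p / s - 1 / 2⌉, ?_⟩
      linarith
    have h2 : (s : ℤ) ∣ (a : ℤ) - b :=
      IsCoprime.dvd_of_dvd_mul_right (Nat.isCoprime_iff_coprime.mpr hps.symm) h1
    have h3 : (a : ℤ) - b = 0 := by
      apply Int.eq_zero_of_abs_lt_dvd h2
      rw [abs_lt]; constructor <;> omega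
    omega
  have hδ : 0 < t / (2 * s) := by positivity
  have hterm : ∀ a : ℕ, Real.exp (-(t * sfrac (v + (a : ℝ) * p / s)) ^ 2)
      ≤ Real.exp (-(t / (2 * s) * r a) ^ 2) := by
    intro a
    apply Real.exp_le_exp.mpr
    have hth := abs_sub_round ((s : ℝ) * v)
    have e1 : t * sfrac (v + (a : ℝ) * p / s)
        = t / (2 * s) * (2 * ((s * v - round (s * v)) + r a)) := by
      rw [← heq]; field_simp
    rw [e1]
    have : ((r a : ℝ)) ^ 2 ≤ (2 * ((s * v - round (s * v)) + r a)) ^ 2 := by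
      set θ := (s : ℝ) * v - round ((s : ℝ) * v)
      rw [abs_le] at hth
      rcases lt_trichotomy (r a) 0 with h | h | h
      · have : (r a : ℝ) ≤ -1 := by exact_mod_cast (by omega : r a ≤ -1)
        nlinarith
      · rw [h]; simp; positivity
      · have : (1 : ℝ) ≤ r a := by exact_mod_cast h
        nlinarith
    have hd2 : 0 ≤ (t / (2 * s)) ^ 2 := by positivity
    rw [mul_pow, mul_pow]
    nlinarith
  calc _ ≤ ∑ a ∈ Finset.range s, Real.exp (-(t / (2 * s) * r a) ^ 2) :=
        Finset.sum_le_sum fun a _ => hterm a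
    _ = ∑ y ∈ (Finset.range s).image r, Real.exp (-(t / (2 * s) * y) ^ 2) := by
        rw [Finset.sum_image hinj]
    _ ≤ 1 + 3 / (t / (2 * s)) := aux_int_sum _ hδ _
    _ = _ := by field_simp; ring

lemma aux_val_add {M : ℕ} [NeZero M] (z : ZMod M) (a : ℕ) :
    ∃ w : ℤ, ((z + (a : ZMod M)).val : ℝ) = z.val + a + M * w := by
  have h : (((z + (a : ZMod M)).val : ℤ) : ZMod M) = ((z.val + a : ℤ) : ZMod M) := by
    push_cast
    simp
  rw [ZMod.intCast_eq_intCast_iff_dvd_sub] at h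
  obtain ⟨w, hw⟩ := h
  refine ⟨-w, ?_⟩
  have : ((z + (a : ZMod M)).val : ℤ) = z.val + a + M * (-w) := by linarith
  exact_mod_cast this

lemma aux_single {d : ℕ} (m : Fin d → ℕ) [∀ j, NeZero (m j)] (x : ∀ j, ZMod (m j)) (j₀ : Fin d)
    (t : ℝ) (ht : 0 < t) (s : ℕ) (hs : s = m j₀ / Nat.gcd ((x j₀).val) (m j₀)) :
    ∑ z : (∀ j, ZMod (m j)), Real.exp (-(t * sfrac (∑ j, ((x j).val : ℝ) * ((z j).val : ℝ) / (m j))) ^ 2)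
      ≤ (Fintype.card (∀ j, ZMod (m j)) : ℝ) * (1 / s + 6 / t) := by
  set F : (∀ j, ZMod (m j)) → ℝ := fun z =>
    Real.exp (-(t * sfrac (∑ j, ((x j).val : ℝ) * ((z j).val : ℝ) / (m j))) ^ 2) with hF
  have hm : 0 < m j₀ := Nat.pos_of_ne_zero (NeZero.ne _)
  set g := Nat.gcd ((x j₀).val) (m j₀) with hg
  have hg0 : 0 < g := Nat.gcd_pos_of_pos_right _ hm
  have hgm : g ∣ m j₀ := Nat.gcd_dvd_right _ _
  have hgx : g ∣ (x j₀).val := Nat.gcd_dvd_left _ _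
  have hs0 : 0 < s := by rw [hs]; exact Nat.div_pos (Nat.le_of_dvd hm hgm) hg0
  have hs0' : (0 : ℝ) < s := by exact_mod_cast hs0
  set p := (x j₀).val / g with hp
  have hcop : Nat.Coprime p s := by rw [hs]; exact Nat.coprime_div_gcd_div_gcd hg0
  have hfrac : ((x j₀).val : ℝ) / m j₀ = (p : ℝ) / s := by
    have e1 : (x j₀).val = p * g := (Nat.div_mul_cancel hgx).symm
    have e2 : m j₀ = s * g := by rw [hs]; exact (Nat.div_mul_cancel hgm).symm
    have e1' : ((x j₀).val : ℝ) = p * g := by exact_mod_cast e1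
    have e2' : (m j₀ : ℝ) = s * g := by exact_mod_cast e2
    have : (0 : ℝ) < g := by exact_mod_cast hg0
    rw [e1', e2']; field_simp
  let e₀ : ℕ → (∀ j, ZMod (m j)) := fun a => Pi.single j₀ (a : ZMod (m j₀))
  have he₀ : ∀ a, e₀ a j₀ = (a : ZMod (m j₀)) := fun a => Pi.single_eq_same _ _
  have he₁ : ∀ a j, j ≠ j₀ → e₀ a j = 0 := fun a j hj => Pi.single_eq_of_ne hj _
  clear_value e₀
  have hshift : ∀ (z : ∀ j, ZMod (m j)) (a : ℕ), F (z + e₀ a)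
      = Real.exp (-(t * sfrac ((∑ j, ((x j).val : ℝ) * ((z j).val : ℝ) / (m j)) + (a : ℝ) * p / s)) ^ 2) := by
    intro z a
    obtain ⟨w, hw⟩ := aux_val_add (z j₀) a
    have hm' : (m j₀ : ℝ) ≠ 0 := by exact_mod_cast hm.ne'
    have : ∑ j, ((x j).val : ℝ) * (((z + e₀ a) j).val : ℝ) / (m j)
        = (∑ j, ((x j).val : ℝ) * ((z j).val : ℝ) / (m j)) + (a : ℝ) * p / s
          + (((x j₀).val * w : ℤ) : ℝ) := by
      rw [← Finset.add_sum_erase _ _ (Finset.mem_univ j₀),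
        ← Finset.add_sum_erase _ (fun j => ((x j).val : ℝ) * ((z j).val : ℝ) / (m j)) (Finset.mem_univ j₀)]
      have e : ∑ j ∈ Finset.univ.erase j₀,
          ((x j).val : ℝ) * (((z + e₀ a) j).val : ℝ) / (m j)
          = ∑ j ∈ Finset.univ.erase j₀, ((x j).val : ℝ) * ((z j).val : ℝ) / (m j) := by
        refine Finset.sum_congr rfl fun j hj => ?_
        rw [Pi.add_apply, he₁ a j (Finset.ne_of_mem_erase hj), add_zero]
      rw [e, Pi.add_apply, he₀, hw, mul_div_assoc (a : ℝ), ← hfrac]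
      push_cast
      field_simp
      ring
    simp only [hF]
    rw [this, sfrac_add_int]
  have hinv : ∀ a : ℕ, ∑ z, F (z + e₀ a) = ∑ z, F z := fun a =>
    Equiv.sum_comp (Equiv.addRight (e₀ a)) F
  have h1 : (s : ℝ) * ∑ z, F z = ∑ z, ∑ a ∈ Finset.range s, F (z + e₀ a) := by
    rw [Finset.sum_comm]
    simp [hinv]
  have h2 : (s : ℝ) * ∑ z, F z ≤ (Fintype.card (∀ j, ZMod (m j)) : ℝ) * (1 + 6 * s / t) := by
    rw [h1]
    calc _ ≤ ∑ z : (∀ j, ZMod (m j)), (1 + 6 * s / t) := by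
          refine Finset.sum_le_sum fun z _ => ?_
          simp only [hshift]
          exact aux_shift _ p s hs0 hcop t ht
      _ = _ := by rw [Finset.sum_const, Finset.card_univ, nsmul_eq_mul]
  have h3 : (s : ℝ) * ((Fintype.card (∀ j, ZMod (m j)) : ℝ) * (1 / s + 6 / t))
      = (Fintype.card (∀ j, ZMod (m j)) : ℝ) * (1 + 6 * s / t) := by
    field_simp
  rw [← h3] at h2
  exact le_of_mul_le_mul_left h2 hs0'

/-- Chernoff bound. -/
lemma aux_chernoff {G : Type*} [Fintype G] [Nonempty G] (u : G → ℝ) (k : ℕ) (hk : 1 ≤ k)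
    (t A E : ℝ) (hE : ∑ z, Real.exp (-(t * u z) ^ 2) ≤ (Fintype.card G : ℝ) * E) :
    ((Finset.univ.filter fun Z : Fin k → G => (1 / (k : ℝ)) * ∑ i, (u (Z i)) ^ 2 ≤ A).card : ℝ) /
      (Fintype.card (Fin k → G) : ℝ) ≤ (Real.exp (t ^ 2 * A) * E) ^ k := by
  have hk' : (0 : ℝ) < k := by exact_mod_cast hk
  have hc : (0 : ℝ) < Fintype.card G := by exact_mod_cast Fintype.card_pos
  have hcard : (Fintype.card (Fin k → G) : ℝ) = (Fintype.card G : ℝ) ^ k := by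
    simp
  rw [hcard, div_le_iff₀ (by positivity)]
  calc _ = ∑ Z ∈ Finset.univ.filter (fun Z : Fin k → G => (1 / (k : ℝ)) * ∑ i, (u (Z i)) ^ 2 ≤ A), (1 : ℝ) := by
        simp
    _ ≤ ∑ Z ∈ Finset.univ.filter (fun Z : Fin k → G => (1 / (k : ℝ)) * ∑ i, (u (Z i)) ^ 2 ≤ A),
          Real.exp (t ^ 2 * A) ^ k * ∏ i, Real.exp (-(t * u (Z i)) ^ 2) := by
        refine Finset.sum_le_sum fun Z hZ => ?_
        have hZ' := (Finset.mem_filter.mp hZ).2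
        rw [← Real.exp_nat_mul, ← Real.exp_sum, ← Real.exp_add]
        apply Real.one_le_exp
        have e : ∑ i, -(t * u (Z i)) ^ 2 = -(t ^ 2 * ∑ i, (u (Z i)) ^ 2) := by
          rw [Finset.mul_sum, ← Finset.sum_neg_distrib]
          exact Finset.sum_congr rfl fun i _ => by ring
        rw [e]
        have h1 : ∑ i, (u (Z i)) ^ 2 ≤ k * A := by
          rw [one_div, inv_mul_le_iff₀ hk'] at hZ'
          exact hZ'
        nlinarith [sq_nonneg t]
    _ ≤ ∑ Z : Fin k → G, Real.exp (t ^ 2 * A) ^ k * ∏ i, Real.exp (-(t * u (Z i)) ^ 2) :=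
        Finset.sum_le_sum_of_subset_of_nonneg (Finset.filter_subset _ _) (fun _ _ _ => by positivity)
    _ = Real.exp (t ^ 2 * A) ^ k * (∑ z, Real.exp (-(t * u z) ^ 2)) ^ k := by
        rw [← Finset.mul_sum, Fintype.sum_pow]
    _ ≤ Real.exp (t ^ 2 * A) ^ k * ((Fintype.card G : ℝ) * E) ^ k := by
        gcongr
    _ = _ := by ring

lemma aux_exp (y : ℝ) (h : y ≤ 1 / 100) : Real.exp y ≤ 100 / 99 := by
  have h1 : Real.exp y ≤ Real.exp (1 / 100) := Real.exp_le_exp.mpr h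
  have h2 : -(1 / 100 : ℝ) + 1 ≤ Real.exp (-(1 / 100)) := Real.add_one_le_exp _
  have h3 : Real.exp (1 / 100 : ℝ) * Real.exp (-(1 / 100)) = 1 := by
    rw [← Real.exp_add]; simp
  nlinarith [Real.exp_pos (1 / 100 : ℝ)]

/-- Probability bound on small normalized sums of squared fractional parts of
random inner products: there are absolute constants `c₁ ∈ (0,1)` and `C₂ > 0`
such that for any nonzero `x` in the torus `G = Π_j ZMod (m j)`, with
`s_* = max_j (m j / gcd (x j) (m j))`, the probability (over `Z` uniform on
`G^k`) that `(1/k)·∑ᵢ ⟨x̄·Zᵢ⟩² ≤ c₁ n^{-2/k}` is at most `s_*^{-9k/10}` when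
`s_* ≤ C₂ n^{1/k}`, and at most `2^{-k}/n` otherwise. -/
theorem prob_small_fractional_sum_bound : ∃ c₁ C₂ : ℝ, 0 < c₁ ∧ c₁ < 1 ∧ 0 < C₂ ∧
    ∀ (d : ℕ), 1 ≤ d → ∀ (m : Fin d → ℕ), (∀ j, 1 ≤ m j) →
    ∀ [∀ j, NeZero (m j)],
    ∀ (k : ℕ), 1 ≤ k →
    ∀ (x : ∀ j, ZMod (m j)), x ≠ 0 →
    let n : ℕ := ∏ j, m j
    let s : ℕ := Finset.univ.sup fun j => m j / Nat.gcd ((x j).val) (m j)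
    let prob : ℝ :=
      ((Finset.univ.filter fun Z : Fin k → (∀ j, ZMod (m j)) =>
          (1/(k:ℝ)) * ∑ i, (sfrac (∑ j, ((x j).val : ℝ) * (((Z i) j).val : ℝ) / (m j)))^2
            ≤ c₁ * (n:ℝ) ^ (-(2:ℝ)/(k:ℝ))).card : ℝ) /
        (Fintype.card (Fin k → ∀ j, ZMod (m j)) : ℝ)
    ((s : ℝ) ≤ C₂ * (n:ℝ) ^ ((1:ℝ)/(k:ℝ)) → prob ≤ (s:ℝ) ^ (-(9:ℝ)*(k:ℝ)/10)) ∧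
    ((s : ℝ) > C₂ * (n:ℝ) ^ ((1:ℝ)/(k:ℝ)) → prob ≤ (2:ℝ) ^ (-(k:ℝ)) / (n:ℝ)) := by
  refine ⟨1 / 10 ^ 8, 4, by norm_num, by norm_num, by norm_num, ?_⟩
  intro d hd m hm _ k hk x hx n s prob
  have hk' : (0 : ℝ) < k := by exact_mod_cast hk
  have : Nonempty (Fin d) := ⟨⟨0, hd⟩⟩
  obtain ⟨j₀, -, hj₀⟩ := Finset.exists_mem_eq_sup (Finset.univ : Finset (Fin d)) Finset.univ_nonempty
    (fun j => m j / Nat.gcd ((x j).val) (m j))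
  have hn1 : 1 ≤ n := Finset.one_le_prod' fun j _ => hm j
  have hn : (0 : ℝ) < n := by exact_mod_cast hn1
  have hs2 : 2 ≤ s := by
    obtain ⟨j, hj⟩ := Function.ne_iff.mp hx
    have hle : m j / Nat.gcd ((x j).val) (m j) ≤ s :=
      Finset.le_sup (f := fun j => m j / Nat.gcd ((x j).val) (m j)) (Finset.mem_univ j)
    refine le_trans ?_ hle
    have hv : 0 < (x j).val := Nat.pos_of_ne_zero fun h => hj ((ZMod.val_eq_zero _).mp h)
    have hlt : Nat.gcd ((x j).val) (m j) < m j :=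
      (Nat.le_of_dvd hv (Nat.gcd_dvd_left _ _)).trans_lt (ZMod.val_lt _)
    obtain ⟨c, hc⟩ := Nat.gcd_dvd_right ((x j).val) (m j)
    have hg0 : 0 < Nat.gcd ((x j).val) (m j) := Nat.gcd_pos_of_pos_left _ hv
    rw [Nat.le_div_iff_mul_le hg0]
    generalize Nat.gcd ((x j).val) (m j) = g at *
    have : 2 ≤ c := by
      by_contra h
      have : c ≤ 1 := by omega
      nlinarith
    nlinarith
  have hs2' : (2 : ℝ) ≤ s := by exact_mod_cast hs2
  have hs0 : (0 : ℝ) < s := by linarith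
  set N : ℝ := (n : ℝ) ^ ((1 : ℝ) / (k : ℝ)) with hN
  have hN0 : 0 < N := Real.rpow_pos_of_pos hn _
  have hN2 : (n : ℝ) ^ (-(2 : ℝ) / (k : ℝ)) = 1 / N ^ 2 := by
    rw [hN, ← Real.rpow_natCast, ← Real.rpow_mul hn.le, one_div, ← Real.rpow_neg hn.le]
    congr 1
    push_cast
    ring
  have hNk : N ^ k = n := by
    rw [hN, ← Real.rpow_natCast, ← Real.rpow_mul hn.le, one_div, inv_mul_cancel₀ hk'.ne',
      Real.rpow_one]
  have hprob : ∀ t : ℝ, 0 < t →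
      prob ≤ (Real.exp (t ^ 2 * (1 / 10 ^ 8 * (1 / N ^ 2))) * (1 / s + 6 / t)) ^ k := by
    intro t ht
    have h := aux_chernoff (fun z : (∀ j, ZMod (m j)) =>
      sfrac (∑ j, ((x j).val : ℝ) * ((z j).val : ℝ) / (m j))) k hk t (1 / 10 ^ 8 * (1 / N ^ 2)) _
      (aux_single m x j₀ t ht s hj₀)
    rw [← hN2] at h ⊢
    exact h
  constructor
  · intro hsN
    have h1 := hprob (200 * s) (by positivity)
    have h2 : Real.exp ((200 * s) ^ 2 * (1 / 10 ^ 8 * (1 / N ^ 2))) ≤ 100 / 99 := by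
      apply aux_exp
      have : (s : ℝ) ^ 2 ≤ 16 * N ^ 2 := by nlinarith
      have e : ((200 : ℝ) * s) ^ 2 * (1 / 10 ^ 8 * (1 / N ^ 2)) = 4 / 10 ^ 4 * (s ^ 2 / N ^ 2) := by
        field_simp; norm_num
      have : (s : ℝ) ^ 2 / N ^ 2 ≤ 16 := by rw [div_le_iff₀ (by positivity)]; exact this
      rw [e]; linarith
    have h3 : (1 : ℝ) / s + 6 / (200 * s) = 103 / 100 * (s : ℝ)⁻¹ := by field_simp; norm_num
    have h4 : (105 / 100 : ℝ) ≤ (s : ℝ) ^ ((1 : ℝ) / 10) := by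
      rw [one_div, Real.le_rpow_inv_iff_of_pos (by norm_num) hs0.le (by norm_num)]
      refine le_trans ?_ hs2'
      norm_num
    have h5 : (s : ℝ) ^ (-(9 : ℝ) * (k : ℝ) / 10) = ((s : ℝ) ^ ((1 : ℝ) / 10) * (s : ℝ)⁻¹) ^ k := by
      rw [← Real.rpow_neg_one, ← Real.rpow_add hs0, ← Real.rpow_natCast, ← Real.rpow_mul hs0.le]
      congr 1
      ring
    rw [h5]
    refine h1.trans ?_
    rw [h3]
    refine pow_le_pow_left₀ (by positivity) ?_ k
    rw [← mul_assoc]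
    refine mul_le_mul_of_nonneg_right ?_ (by positivity)
    linarith
  · intro hsN
    have h1 := hprob (200 * N) (by positivity)
    have h2 : Real.exp ((200 * N) ^ 2 * (1 / 10 ^ 8 * (1 / N ^ 2))) ≤ 100 / 99 := by
      apply aux_exp
      have e : ((200 : ℝ) * N) ^ 2 * (1 / 10 ^ 8 * (1 / N ^ 2)) = 4 / 10 ^ 4 := by
        field_simp; norm_num
      rw [e]; norm_num
    have h3 : (1 : ℝ) / s + 6 / (200 * N) ≤ 28 / 100 * N⁻¹ := by
      have : (1 : ℝ) / s ≤ 1 / (4 * N) := one_div_le_one_div_of_le (by positivity) hsN.le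
      have e : 28 / 100 * N⁻¹ = 1 / (4 * N) + 6 / (200 * N) := by field_simp; norm_num
      rw [e]; linarith
    have h5 : (2 : ℝ) ^ (-(k : ℝ)) / (n : ℝ) = (1 / 2 * N⁻¹) ^ k := by
      rw [mul_pow, inv_pow, hNk, Real.rpow_neg (by norm_num), Real.rpow_natCast, one_div, inv_pow,
        div_eq_mul_inv]
    rw [h5]
    refine h1.trans ?_
    refine pow_le_pow_left₀ (by positivity) ?_ k
    calc _ ≤ 100 / 99 * (28 / 100 * N⁻¹) := by gcongr
      _ ≤ _ := by
        have : 0 < N⁻¹ := by positivity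
        linarith
end

section
/- For s ≥ 0 define q_s : ℤ → ℝ by q_s(x) = Σ_{j=0}^∞ e^{−s}·s^{|x|+2j}/(|x|+2j)! · Nat.choose(|x|+2j, j) · 2^{−(|x|+2j)} (the distribution at time s of a rate-1 continuous-time simple random walk on ℤ started at 0). There exist constants c > 0 and C > 0 such that for every s ∈ (0, ∞) and every integer r with r ≥ √s, one has both c·r·(min(r/s, 1))·log(max(r/s, e)) ≤ −log( Σ_{x ≥ r} q_s(x) ) ≤ C·r·(min(r/s, 1))·log(max(r/s, e)), and c·max(s/r, 1) ≤ ( Σ_{x ≥ r} q_s(x) ) / q_s(r) ≤ C·max(s/r, 1). -/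
open Real

namespace SRWTail

/-- Terms of the modified Bessel series. -/
noncomputable def bT (t : ℝ) (n j : ℕ) : ℝ :=
  t ^ (n + 2 * j) / ((Nat.factorial j : ℝ) * (Nat.factorial (n + j) : ℝ))

/-- The modified Bessel function `I_n(2t)`. -/
noncomputable def bI (t : ℝ) (n : ℕ) : ℝ := ∑' j : ℕ, bT t n j

lemma bT_pos {t : ℝ} (ht : 0 < t) (n j : ℕ) : 0 < bT t n j := by
  unfold bT; positivity

/-- The two-variable exponential series. -/
noncomputable def gg (a b : ℝ) (p : ℕ × ℕ) : ℝ :=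
  (a ^ p.1 / (Nat.factorial p.1 : ℝ)) * (b ^ p.2 / (Nat.factorial p.2 : ℝ))

lemma gg_summable {a b : ℝ} (ha : 0 ≤ a) (hb : 0 ≤ b) : Summable (gg a b) := by
  have h1 := Real.summable_pow_div_factorial a
  have h2 := Real.summable_pow_div_factorial b
  exact h1.mul_of_nonneg h2 (fun i => by positivity) (fun i => by positivity)

lemma gg_tsum {a b : ℝ} (ha : 0 ≤ a) (hb : 0 ≤ b) : ∑' p, gg a b p = exp (a + b) := by
  have h1 := Real.summable_pow_div_factorial a
  have h2 := Real.summable_pow_div_factorial b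
  have := h1.tsum_mul_tsum h2 (gg_summable ha hb)
  rw [Real.exp_add, Real.exp_eq_exp_ℝ, NormedSpace.exp_eq_tsum_div]
  exact this.symm

/-- The reindexing of the pairs `i ≥ j`. -/
def ph (p : ℕ × ℕ) : ℕ × ℕ := (p.1 + p.2, p.2)

lemma ph_inj : Function.Injective ph := by
  rintro ⟨a, b⟩ ⟨c, d⟩ h
  simp only [ph, Prod.mk.injEq] at h ⊢
  omega

lemma gg_ph {t z : ℝ} (hz : 0 < z) (n j : ℕ) :
    gg (t * z) (t / z) (ph (n, j)) = z ^ n * bT t n j := by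
  simp only [gg, ph, bT]
  have : z ^ j ≠ 0 := by positivity
  rw [mul_pow, div_pow, pow_add z n j]
  field_simp
  ring

lemma sum_ph {t z : ℝ} (ht : 0 < t) (hz : 0 < z) :
    Summable (fun p : ℕ × ℕ => z ^ p.1 * bT t p.1 p.2) := by
  have h := (gg_summable (a := t * z) (b := t / z) (by positivity) (by positivity)).comp_injective ph_inj
  refine h.congr ?_
  rintro ⟨n, j⟩
  exact (gg_ph hz n j)

lemma bT_summable {t : ℝ} (ht : 0 < t) (n : ℕ) : Summable (bT t n) := by
  have := (sum_ph ht one_pos).prod_factor n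
  simpa using this

lemma bI_pos {t : ℝ} (ht : 0 < t) (n : ℕ) : 0 < bI t n :=
  (bT_summable ht n).tsum_pos (fun j => (bT_pos ht n j).le) 0 (bT_pos ht n 0)

lemma gen_summable {t z : ℝ} (ht : 0 < t) (hz : 0 < z) :
    Summable (fun n : ℕ => z ^ n * bI t n) := by
  have := (sum_ph ht hz).prod
  refine this.congr (fun n => ?_)
  simp only [bI, tsum_mul_left]

lemma gen_eq {t z : ℝ} (ht : 0 < t) (hz : 0 < z) :
    ∑' n : ℕ, z ^ n * bI t n = ∑' p : ℕ × ℕ, gg (t * z) (t / z) (ph p) := by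
  have h1 : ∑' p : ℕ × ℕ, gg (t * z) (t / z) (ph p) = ∑' p : ℕ × ℕ, z ^ p.1 * bT t p.1 p.2 :=
    tsum_congr (fun p => gg_ph hz p.1 p.2)
  rw [h1, (sum_ph ht hz).tsum_prod]
  exact tsum_congr (fun n => by simp only [bI, tsum_mul_left])

lemma gen_le {t z : ℝ} (ht : 0 < t) (hz : 0 < z) :
    ∑' n : ℕ, z ^ n * bI t n ≤ exp (t * z + t / z) := by
  have ha : 0 ≤ t * z := by positivity
  have hb : 0 ≤ t / z := by positivity
  rw [gen_eq ht hz, ← gg_tsum ha hb]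
  exact tsum_comp_le_tsum_of_inj (gg_summable ha hb)
    (fun p => by unfold gg; positivity) ph_inj

lemma bI_summable {t : ℝ} (ht : 0 < t) : Summable (bI t) := by
  simpa using gen_summable ht one_pos

lemma total_ge {t : ℝ} (ht : 0 < t) : exp (2 * t) ≤ 2 * ∑' n : ℕ, bI t n := by
  have h0 := gen_eq ht one_pos
  simp only [one_pow, one_mul, mul_one, div_one] at h0
  have hs := gg_summable ht.le ht.le
  set A : Set (ℕ × ℕ) := {p | p.2 ≤ p.1} with hA
  have h1 : ∑' p, gg t t (ph p) = ∑' p, A.indicator (gg t t) p := by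
    have : ∀ p, gg t t (ph p) = A.indicator (gg t t) (ph p) := by
      intro p
      rw [Set.indicator_of_mem]
      simp [hA, ph]
    rw [tsum_congr this]
    refine ph_inj.tsum_eq ?_
    intro p hp
    have hp' : p ∈ A := Set.mem_of_indicator_ne_zero hp
    simp only [hA, Set.mem_ofPred_eq] at hp'
    exact ⟨(p.1 - p.2, p.2), by simp [ph, Nat.sub_add_cancel hp']⟩
  have hsi : Summable (A.indicator (gg t t)) := hs.indicator A
  have h2 : ∑' p : ℕ × ℕ, A.indicator (gg t t) p.swap = ∑' p, A.indicator (gg t t) p :=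
    (Equiv.prodComm ℕ ℕ).tsum_eq (A.indicator (gg t t))
  have hsi2 : Summable (fun p : ℕ × ℕ => A.indicator (gg t t) p.swap) :=
    (Equiv.prodComm ℕ ℕ).summable_iff.mpr hsi
  have h3 : ∑' p, gg t t p ≤
      ∑' p : ℕ × ℕ, (A.indicator (gg t t) p + A.indicator (gg t t) p.swap) := by
    refine hs.tsum_le_tsum ?_ (hsi.add hsi2)
    rintro ⟨i, j⟩
    have hn : ∀ p, 0 ≤ A.indicator (gg t t) p := fun p =>
      Set.indicator_nonneg (fun p _ => by unfold gg; positivity) p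
    rcases le_total j i with h | h
    · have : A.indicator (gg t t) (i, j) = gg t t (i, j) := Set.indicator_of_mem (by simpa [hA] using h) _
      have h' := hn (i, j).swap
      linarith
    · have : A.indicator (gg t t) (i, j).swap = gg t t (i, j).swap :=
        Set.indicator_of_mem (by simpa [hA] using h) _
      have h' := hn (i, j)
      have h'' : gg t t (i, j).swap = gg t t (i, j) := by simp [gg, mul_comm]
      linarith
  rw [hsi.tsum_add hsi2, h2, ← h1, ← h0, gg_tsum ht.le ht.le] at h3
  rw [two_mul t]; linarith

lemma bI_rec {t : ℝ} (ht : 0 < t) (n : ℕ) :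
    t * bI t n = t * bI t (n + 2) + (n + 1) * bI t (n + 1) := by
  have hn := bT_summable ht n
  have hn1 := bT_summable ht (n + 1)
  have hn2 := bT_summable ht (n + 2)
  unfold bI
  rw [hn.tsum_eq_zero_add, hn1.tsum_eq_zero_add, mul_add, mul_add, ← tsum_mul_left, ← tsum_mul_left,
    ← tsum_mul_left]
  have e0 : t * bT t n 0 = (n + 1) * bT t (n + 1) 0 := by
    simp only [bT, Nat.factorial_succ, add_zero, mul_zero, pow_succ]
    push_cast
    field_simp
  have e1 : ∀ j, t * bT t n (j + 1) = t * bT t (n + 2) j + (n + 1) * bT t (n + 1) (j + 1) := by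
    intro j
    have a1 : n + (j + 1) = (n + j) + 1 := by ring
    have a2 : n + 2 + j = (n + j) + 1 + 1 := by ring
    have a3 : n + 1 + (j + 1) = (n + j) + 1 + 1 := by ring
    have b1 : n + 2 * (j + 1) = n + 2 * j + 2 := by ring
    have b2 : n + 2 + 2 * j = n + 2 * j + 2 := by ring
    have b3 : n + 1 + 2 * (j + 1) = n + 2 * j + 3 := by ring
    simp only [bT, a1, a2, a3, b1, b2, b3, Nat.factorial_succ, pow_add]
    push_cast
    field_simp
    ring
  rw [tsum_congr e1, ((hn2.mul_left t)).tsum_add (((summable_nat_add_iff 1).mpr hn1).mul_left _), e0]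
  ring

lemma bI_anti_step {t : ℝ} (ht : 0 < t) (n : ℕ) : bI t (n + 1) ≤ bI t n := by
  have hn := bT_summable ht n
  have hn1 := bT_summable ht (n + 1)
  have hs := (summable_nat_add_iff 1).mpr hn
  have e : ∀ j, bT t (n + 1) j ≤ (1 / 2) * (bT t n j + bT t n (j + 1)) := by
    intro j
    have a1 : n + (j + 1) = (n + j) + 1 := by ring
    have a2 : n + 1 + j = (n + j) + 1 := by ring
    have b1 : n + 2 * (j + 1) = n + 2 * j + 2 := by ring
    have b2 : n + 1 + 2 * j = n + 2 * j + 1 := by ring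
    simp only [bT, a1, a2, b1, b2, Nat.factorial_succ, pow_add]
    push_cast
    have key : t * (j + 1) * 2 ≤ (n + j + 1) * (j + 1) + t ^ 2 := by
      have : (0:ℝ) ≤ n * (j + 1) := by positivity
      nlinarith [sq_nonneg (t - (j + 1))]
    have e1 : t ^ n * t ^ (2 * j) * t ^ 1 / ((Nat.factorial j : ℝ) * ((n + j + 1) * (Nat.factorial (n + j) : ℝ)))
        = (t ^ n * t ^ (2 * j) / (2 * (Nat.factorial j : ℝ) * ((n + j + 1) * (j + 1) * (Nat.factorial (n + j) : ℝ)))) * (t * (j + 1) * 2) := by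
      field_simp
    rw [e1]
    refine (mul_le_mul_of_nonneg_left key (by positivity)).trans (le_of_eq ?_)
    field_simp
  have h := hn1.tsum_le_tsum e ((hn.add hs).mul_left _)
  rw [tsum_mul_left, hn.tsum_add hs] at h
  have h0 := hn.tsum_eq_zero_add
  have := bT_pos ht n 0
  unfold bI
  linarith

lemma bI_anti {t : ℝ} (ht : 0 < t) : Antitone (bI t) := antitone_nat_of_succ_le (bI_anti_step ht)

lemma tele {t : ℝ} (ht : 0 < t) (r K : ℕ) :
    (r + 1) * (∑ k ∈ Finset.range K, bI t (r + 1 + k)) + t * (bI t (r + K) + bI t (r + K + 1))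
      ≤ t * (bI t r + bI t (r + 1)) := by
  induction K with
  | zero => simp
  | succ K ih =>
    rw [Finset.sum_range_succ]
    have h := bI_rec ht (r + K)
    have hp := bI_pos ht (r + K + 1)
    have e1 : r + 1 + K = r + K + 1 := by ring
    have e2 : r + (K + 1) = r + K + 1 := by ring
    rw [e1, e2]
    push_cast at h
    have : (0:ℝ) ≤ K * bI t (r + K + 1) := by positivity
    have e3 : r + K + 1 + 1 = r + K + 2 := by ring
    rw [e3]
    nlinarith

lemma tail_le {t : ℝ} (ht : 0 < t) (r : ℕ) :
    (r + 1) * ∑' k, bI t (r + 1 + k) ≤ t * (bI t r + bI t (r + 1)) := by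
  rw [← tsum_mul_left]
  refine Real.tsum_le_of_sum_range_le (fun k => ?_) (fun K => ?_)
  · have := bI_pos ht (r + 1 + k); positivity
  · rw [← Finset.mul_sum]
    have := tele ht r K
    have h1 := bI_pos ht (r + K)
    have h2 := bI_pos ht (r + K + 1)
    have : 0 ≤ t * (bI t (r + K) + bI t (r + K + 1)) := by positivity
    linarith

lemma step_le {t : ℝ} (ht : 0 < t) (n : ℕ) : bI t n ≤ (1 + (n + 1) / t) * bI t (n + 1) := by
  have h := bI_rec ht n
  have h2 := bI_anti_step ht (n + 1)
  have : t * bI t n ≤ t * ((1 + (n + 1) / t) * bI t (n + 1)) := by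
    have e : t * ((1 + (n + 1) / t) * bI t (n + 1)) = t * bI t (n + 1) + (n + 1) * bI t (n + 1) := by
      field_simp
    rw [e, h]
    have := mul_le_mul_of_nonneg_left h2 ht.le
    linarith
  exact le_of_mul_le_mul_left this ht

lemma steps_le {t : ℝ} (ht : 0 < t) (a k : ℕ) :
    bI t a ≤ exp (k * (a + k) / t) * bI t (a + k) := by
  have key : ∀ M : ℝ, ∀ k : ℕ, (a + k : ℝ) ≤ M → bI t a ≤ exp (k * M / t) * bI t (a + k) := by
    intro M k
    induction k with
    | zero => intro _; simp
    | succ k ih =>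
      intro hk
      push_cast at hk
      have h1 := ih (by linarith)
      have h2 := step_le ht (a + k)
      have h3 : 1 + ((a + k : ℕ) + 1 : ℝ) / t ≤ exp (M / t) := by
        have := Real.add_one_le_exp (M / t)
        have h4 : ((a + k : ℕ) + 1 : ℝ) / t ≤ M / t := by
          push_cast
          gcongr
          linarith
        linarith
      have hp := bI_pos ht (a + k + 1)
      have e : exp (((k + 1 : ℕ) : ℝ) * M / t) = exp (k * M / t) * exp (M / t) := by
        rw [← Real.exp_add]; congr 1; push_cast; ring
      rw [e, mul_assoc]
      refine h1.trans (mul_le_mul_of_nonneg_left ?_ (exp_pos _).le)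
      exact h2.trans (mul_le_mul_of_nonneg_right h3 hp.le)
  exact key _ k le_rfl

lemma shift_summable {t : ℝ} (ht : 0 < t) (r : ℕ) : Summable (fun k => bI t (r + k)) := by
  have := (summable_nat_add_iff r).mpr (bI_summable ht)
  exact this.congr (fun k => by rw [add_comm])

lemma chernoff {t z : ℝ} (ht : 0 < t) (hz : 1 ≤ z) (r : ℕ) :
    z ^ r * ∑' k, bI t (r + k) ≤ exp (t * z + t / z) := by
  have hz0 : 0 < z := by linarith
  refine le_trans ?_ (gen_le ht hz0)
  rw [← tsum_mul_left, ← (gen_summable ht hz0).sum_add_tsum_nat_add r]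
  have h0 : 0 ≤ ∑ i ∈ Finset.range r, z ^ i * bI t i :=
    Finset.sum_nonneg (fun i _ => by have := bI_pos ht i; positivity)
  have h1 : ∑' k, z ^ r * bI t (r + k) ≤ ∑' k, z ^ (k + r) * bI t (k + r) := by
    refine ((shift_summable ht r).mul_left _).tsum_le_tsum (fun k => ?_)
      ((summable_nat_add_iff r).mpr (gen_summable ht hz0))
    rw [add_comm r k]
    have := bI_pos ht (k + r)
    have hp : z ^ r ≤ z ^ (k + r) := pow_le_pow_right₀ hz (by omega)
    exact mul_le_mul_of_nonneg_right hp this.le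
  linarith


lemma tail_ge_mul {t : ℝ} (ht : 0 < t) (n k : ℕ) :
    (k + 1) * bI t (n + k) ≤ ∑' i, bI t (n + i) := by
  have h := (shift_summable ht n).sum_le_tsum (Finset.range (k + 1)) (fun i _ => (bI_pos ht _).le)
  refine le_trans ?_ h
  have h2 : ∑ i ∈ Finset.range (k + 1), bI t (n + k) ≤ ∑ i ∈ Finset.range (k + 1), bI t (n + i) := by
    refine Finset.sum_le_sum (fun i hi => bI_anti ht ?_)
    have := Finset.mem_range.mp hi
    omega
  simpa using h2

lemma ratio_upper {t : ℝ} (ht : 0 < t) (n : ℕ) (hn : 1 ≤ n) :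
    ∑' i, bI t (n + i) ≤ 2 * max (2 * t / n) 1 * bI t n := by
  obtain ⟨m, rfl⟩ : ∃ m, n = m + 1 := ⟨n - 1, by omega⟩
  have h1 := tail_le ht m
  have h2 := step_le ht m
  have hp := bI_pos ht (m + 1)
  set T := ∑' i, bI t (m + 1 + i)
  have hm : (0:ℝ) < m + 1 := by positivity
  push_cast
  have h3 : t * bI t m ≤ (t + (m + 1)) * bI t (m + 1) := by
    have := mul_le_mul_of_nonneg_left h2 ht.le
    refine this.trans (le_of_eq ?_)
    field_simp
  have h4 : (m + 1) * T ≤ (2 * t + (m + 1)) * bI t (m + 1) := by nlinarith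
  have h5 : T ≤ (2 * t / (m + 1) + 1) * bI t (m + 1) := by
    have e : (m + 1 : ℝ) * ((2 * t / (m + 1) + 1) * bI t (m + 1)) = (2 * t + (m + 1)) * bI t (m + 1) := by
      field_simp
    rw [← e] at h4
    exact le_of_mul_le_mul_left h4 hm
  refine h5.trans (mul_le_mul_of_nonneg_right ?_ hp.le)
  have a := le_max_left (2 * t / (m + 1 : ℝ)) 1
  have b := le_max_right (2 * t / (m + 1 : ℝ)) 1
  linarith

lemma ratio_lower {t : ℝ} (ht : 0 < t) (n : ℕ) (hn : 1 ≤ n) (hs : 2 * t ≤ (n : ℝ) ^ 2) :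
    exp (-4) * max (2 * t / n) 1 * bI t n ≤ ∑' i, bI t (n + i) := by
  have hn0 : (0:ℝ) < n := by exact_mod_cast hn
  set k := ⌊2 * t / n⌋₊ with hk
  have hk1 : (k : ℝ) ≤ 2 * t / n := Nat.floor_le (by positivity)
  have hk2 : 2 * t / n < k + 1 := Nat.lt_floor_add_one _
  have hkn : (k : ℝ) ≤ n := by
    refine hk1.trans ?_
    rw [div_le_iff₀ hn0]; nlinarith
  have h1 := tail_ge_mul ht n k
  have h2 := steps_le ht n k
  have hp := bI_pos ht (n + k)
  have h3 : (k : ℝ) * (n + k) / t ≤ 4 := by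
    rw [div_le_iff₀ ht]
    rw [le_div_iff₀ hn0] at hk1
    have : (k : ℝ) * k ≤ k * n := mul_le_mul_of_nonneg_left hkn (by positivity)
    nlinarith
  have h4 : bI t n ≤ exp 4 * bI t (n + k) :=
    h2.trans (mul_le_mul_of_nonneg_right (exp_le_exp.mpr h3) hp.le)
  have hmax : max (2 * t / n) 1 ≤ (k + 1 : ℝ) := max_le hk2.le (by linarith [Nat.cast_nonneg (α := ℝ) k])
  calc exp (-4) * max (2 * t / n) 1 * bI t n
      ≤ exp (-4) * (k + 1) * (exp 4 * bI t (n + k)) := by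
        have := bI_pos ht n
        gcongr
    _ = (exp (-4) * exp 4) * ((k + 1) * bI t (n + k)) := by ring
    _ = (k + 1) * bI t (n + k) := by rw [← Real.exp_add]; simp
    _ ≤ _ := h1

lemma tail_pos {t : ℝ} (ht : 0 < t) (n : ℕ) : 0 < ∑' i, bI t (n + i) :=
  (shift_summable ht n).tsum_pos (fun i => (bI_pos ht _).le) 0 (bI_pos ht _)

lemma log_upper_small {t : ℝ} (ht : 0 < t) (n : ℕ) (hn : 1 ≤ n) (hs : 2 * t ≤ (n : ℝ) ^ 2) :
    2 * t - log (∑' i, bI t (n + i)) ≤ 10 * ((n : ℝ) ^ 2 / (2 * t)) := by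
  have hn0 : (0:ℝ) < n := by exact_mod_cast hn
  set T := ∑' i, bI t (n + i) with hT
  have hTpos : 0 < T := tail_pos ht n
  obtain ⟨m, rfl⟩ : ∃ m, n = m + 1 := ⟨n - 1, by omega⟩
  set n := m + 1 with hnm
  have h0 : bI t 0 ≤ exp (8 * ((n : ℝ) ^ 2 / (2 * t))) * bI t (n + n) := by
    have h := steps_le ht 0 (n + n)
    rw [zero_add] at h
    refine h.trans (le_of_eq ?_)
    congr 2
    push_cast
    field_simp
    ring
  have h1 : (n : ℝ) * bI t (n + n) ≤ T := by
    have h := tail_ge_mul ht n m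
    have h' : bI t (n + n) ≤ bI t (n + m) := bI_anti ht (by omega)
    have h'' : ((m : ℝ) + 1) = n := by simp [hnm]
    rw [h''] at h
    exact (mul_le_mul_of_nonneg_left h' hn0.le).trans h
  have h2 : ∑' i, bI t i ≤ 2 * n * bI t 0 := by
    have e := (bI_summable ht).sum_add_tsum_nat_add n
    have e2 : ∑' i, bI t (i + n) = T := tsum_congr (fun i => by rw [add_comm])
    have e3 : ∑ i ∈ Finset.range n, bI t i ≤ n * bI t 0 := by
      have := Finset.sum_le_card_nsmul (Finset.range n) (bI t) (bI t 0)
        (fun i _ => bI_anti ht (Nat.zero_le i))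
      simpa using this
    have e4 := tail_le ht m
    have e5 : (n : ℝ) * T ≤ n * (n * bI t 0) := by
      have h'' : ((m : ℝ) + 1) = n := by simp [hnm]
      rw [h''] at e4
      have a1 : bI t m ≤ bI t 0 := bI_anti ht (Nat.zero_le _)
      have a2 : bI t (m + 1) ≤ bI t 0 := bI_anti ht (Nat.zero_le _)
      have a3 := bI_pos ht 0
      have a4 : t * (bI t m + bI t (m + 1)) ≤ t * (bI t 0 + bI t 0) := by gcongr
      have a5 := mul_le_mul_of_nonneg_right hs a3.le
      have a6 := e4.trans a4
      change (n : ℝ) * T ≤ _ at a6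
      nlinarith
    have e6 := le_of_mul_le_mul_left e5 hn0
    rw [← e, e2]; linarith
  have h3 := total_ge ht
  set E := exp (8 * ((n : ℝ) ^ 2 / (2 * t))) with hE
  have hEp : 0 < E := exp_pos _
  have h4 : exp (2 * t) ≤ 4 * (E * T) := by
    have b1 : (n : ℝ) * bI t 0 ≤ n * (E * bI t (n + n)) := mul_le_mul_of_nonneg_left h0 hn0.le
    have b2 : E * (n * bI t (n + n)) ≤ E * T := mul_le_mul_of_nonneg_left h1 hEp.le
    nlinarith
  have h5 := Real.log_le_log (exp_pos _) h4
  rw [Real.log_exp, Real.log_mul (by norm_num) (by positivity), Real.log_mul hEp.ne' hTpos.ne', hE,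
    Real.log_exp] at h5
  have h6 : log 4 ≤ 2 := by
    have : (4:ℝ) = 2 ^ 2 := by norm_num
    rw [this, Real.log_pow]
    have := Real.log_two_lt_d9
    push_cast; linarith
  have h7 : 1 ≤ (n : ℝ) ^ 2 / (2 * t) := by rw [le_div_iff₀ (by positivity)]; linarith
  linarith

lemma log_upper_large {t : ℝ} (ht : 0 < t) (n : ℕ) (hn : 1 ≤ n) (hs : 2 * t ≤ n) :
    2 * t - log (∑' i, bI t (n + i)) ≤ 10 * (n * log (max (n / (2 * t)) (exp 1))) := by
  have hn0 : (0:ℝ) < n := by exact_mod_cast hn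
  set T := ∑' i, bI t (n + i) with hT
  have hTpos : 0 < T := tail_pos ht n
  have h1 : (t / n) ^ n ≤ T := by
    have a1 : bI t n ≤ T := by simpa using tail_ge_mul ht n 0
    have a2 : bT t n 0 ≤ bI t n :=
      (bT_summable ht n).le_tsum 0 (fun j _ => (bT_pos ht n j).le)
    refine le_trans ?_ (a2.trans a1)
    simp only [bT, div_pow, mul_zero, add_zero, Nat.factorial_zero, Nat.cast_one, one_mul]
    gcongr
    exact_mod_cast Nat.factorial_le_pow n
  have h2 := Real.log_le_log (by positivity) h1
  have e : t / n = (n / (2 * t))⁻¹ * 2⁻¹ := by field_simp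
  rw [Real.log_pow, e, Real.log_mul (by positivity) (by norm_num), Real.log_inv, Real.log_inv] at h2
  have h3 : log (n / (2 * t)) ≤ log (max (n / (2 * t)) (exp 1)) :=
    Real.log_le_log (by positivity) (le_max_left _ _)
  have h4 : 1 ≤ log (max (n / (2 * t)) (exp 1)) := by
    have := Real.log_le_log (exp_pos 1) (le_max_right (n / (2 * t)) (exp 1))
    rwa [Real.log_exp] at this
  set L := log (max (n / (2 * t)) (exp 1))
  have h5 := Real.log_two_lt_d9
  have h6 : (n : ℝ) * (log (n / (2 * t)) + log 2) ≤ n * (L + L) :=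
    mul_le_mul_of_nonneg_left (by linarith) hn0.le
  have h7 : (n : ℝ) * 1 ≤ n * L := mul_le_mul_of_nonneg_left h4 hn0.le
  nlinarith

lemma log_chernoff {t z : ℝ} (ht : 0 < t) (hz : 1 ≤ z) (n : ℕ) :
    2 * t - (t * z + t / z) + n * log z ≤ 2 * t - log (∑' i, bI t (n + i)) := by
  have h := chernoff ht hz n
  have hT := tail_pos ht n
  have hz0 : 0 < z := by linarith
  have h2 := Real.log_le_log (by positivity) h
  rw [Real.log_exp, Real.log_mul (by positivity) hT.ne', Real.log_pow] at h2
  linarith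

lemma log_lower_small {t : ℝ} (ht : 0 < t) (n : ℕ) (hs : n ≤ 2 * t) :
    (1 / 10) * ((n : ℝ) ^ 2 / (2 * t)) ≤ 2 * t - log (∑' i, bI t (n + i)) := by
  set l : ℝ := n / (4 * t) with hl
  have hl0 : 0 ≤ l := by positivity
  have hl1 : l ≤ 1 / 2 := by
    rw [hl, div_le_iff₀ (by positivity)]; linarith
  have h := log_chernoff ht (Real.one_le_exp hl0) n
  rw [Real.log_exp] at h
  have hc : exp l + 1 / exp l ≤ 2 + 2 * l ^ 2 := by
    have h1 := Real.cosh_le_exp_half_sq l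
    rw [Real.cosh_eq, Real.exp_neg] at h1
    have h2 : exp (l ^ 2 / 2) ≤ 1 + l ^ 2 := by
      have h3 := Real.one_sub_le_exp_neg (l ^ 2 / 2)
      rw [Real.exp_neg] at h3
      have h5 : 0 < exp (l ^ 2 / 2) := exp_pos _
      have h6 : (1 - l ^ 2 / 2) * exp (l ^ 2 / 2) ≤ 1 := by
        have := mul_le_mul_of_nonneg_right h3 h5.le
        rwa [inv_mul_cancel₀ h5.ne'] at this
      have h7 : 1 ≤ (1 - l ^ 2 / 2) * (1 + l ^ 2) := by
        have : l ^ 2 ≤ 1 := by nlinarith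
        nlinarith [sq_nonneg l]
      have h8 : 0 < 1 - l ^ 2 / 2 := by nlinarith
      exact le_of_mul_le_mul_left (h6.trans h7) h8
    rw [one_div]; linarith
  have hc2 := mul_le_mul_of_nonneg_left hc ht.le
  have e1 : t * (2 + 2 * l ^ 2) = 2 * t + (1 / 4) * ((n : ℝ) ^ 2 / (2 * t)) := by
    rw [hl]; field_simp; ring
  have e2 : (n : ℝ) * l = (1 / 2) * ((n : ℝ) ^ 2 / (2 * t)) := by
    rw [hl]; field_simp; ring
  have e3 : t * exp l + t / exp l = t * (exp l + 1 / exp l) := by ring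
  have : 0 ≤ (n : ℝ) ^ 2 / (2 * t) := by positivity
  rw [e3] at h
  linarith

lemma log_lower_large {t : ℝ} (ht : 0 < t) (n : ℕ) (hs : 2 * t ≤ n) :
    (1 / 10) * (n * log (max (n / (2 * t)) (exp 1))) ≤ 2 * t - log (∑' i, bI t (n + i)) := by
  set z := max (n / (2 * t)) (exp 1) with hz
  have he : exp 1 ≤ z := le_max_right _ _
  have he2 := Real.exp_one_gt_d9
  have he3 := Real.exp_one_lt_d9
  have hz1 : 1 ≤ z := by linarith
  have hz0 : 0 < z := by linarith
  have hL : 1 ≤ log z := by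
    have := Real.log_le_log (exp_pos 1) he
    rwa [Real.log_exp] at this
  have h := log_chernoff ht hz1 n
  have h1 : t / z ≤ t := div_le_self ht.le hz1
  have h2 : t * z - t ≤ (9 / 10) * n := by
    rcases le_total (n / (2 * t)) (exp 1) with hc | hc
    · have : z = exp 1 := max_eq_right hc
      rw [this]; nlinarith
    · have : z = n / (2 * t) := max_eq_left hc
      have e : t * z = n / 2 := by rw [this]; field_simp
      rw [e]
      have : (0:ℝ) ≤ n := by positivity
      linarith
  have h3 : (n : ℝ) * 1 ≤ n * log z := mul_le_mul_of_nonneg_left hL (by positivity)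
  linarith

lemma q_eq (s : ℝ) (n : ℕ) : (∑' j : ℕ,
      Real.exp (-s) * s ^ (n + 2*j) / (Nat.factorial (n + 2*j) : ℝ) *
        (Nat.choose (n + 2*j) j : ℝ) * (2:ℝ)⁻¹ ^ (n + 2*j)) = exp (-s) * bI (s / 2) n := by
  unfold bI
  rw [← tsum_mul_left]
  refine tsum_congr (fun j => ?_)
  have e : n + 2 * j = j + (n + j) := by ring
  have hc : ((Nat.choose (n + 2*j) j : ℕ) : ℝ) =
      (Nat.factorial (n + 2 * j) : ℝ) / ((Nat.factorial j : ℝ) * (Nat.factorial (n + j) : ℝ)) := by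
    rw [e]; exact Nat.cast_add_choose ℝ
  rw [hc, bT, div_eq_mul_inv s 2, mul_pow]
  have : (Nat.factorial (n + 2 * j) : ℝ) ≠ 0 := by positivity
  field_simp

/-- Integers at least `n` as shifted naturals. -/
def shiftEquiv (n : ℕ) : ℕ ≃ {x : ℤ // (n : ℤ) ≤ x} where
  toFun k := ⟨(n : ℤ) + k, by omega⟩
  invFun x := (x.1 - n).toNat
  left_inv k := by simp
  right_inv x := by
    obtain ⟨x, hx⟩ := x
    apply Subtype.ext
    simp only
    omega

lemma tail_eq (f : ℕ → ℝ) (n : ℕ) :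
    ∑' x : {x : ℤ // (n : ℤ) ≤ x}, f x.1.natAbs = ∑' k : ℕ, f (n + k) := by
  rw [← (shiftEquiv n).tsum_eq]
  refine tsum_congr (fun k => ?_)
  congr 1

end SRWTail

/-- Two-sided bounds on the upper tail of the continuous-time simple random
walk on `ℤ`, and on its tail-to-point ratio: with
`q_s(x) = ∑_j e^{-s} s^{|x|+2j}/(|x|+2j)! · C(|x|+2j, j) · 2^{-(|x|+2j)}`
the time-`s` distribution of the rate-1 SRW started at 0, there are constants
`c, C > 0` such that uniformly in `s > 0` and integers `r ≥ √s`,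
`-log P(X_s ≥ r) ≍ r·min(r/s,1)·log(max(r/s,e))` and
`P(X_s ≥ r)/P(X_s = r) ≍ max(s/r, 1)`. -/
theorem srw_upper_tail_bounds : ∃ c C : ℝ, 0 < c ∧ 0 < C ∧
    ∀ (s : ℝ) (r : ℤ), 0 < s → Real.sqrt s ≤ (r : ℝ) →
    let q : ℤ → ℝ := fun x => ∑' j : ℕ,
      Real.exp (-s) * s ^ (x.natAbs + 2*j) / (Nat.factorial (x.natAbs + 2*j) : ℝ) *
        (Nat.choose (x.natAbs + 2*j) j : ℝ) * (2:ℝ)⁻¹ ^ (x.natAbs + 2*j)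
    (c * (r:ℝ) * min ((r:ℝ)/s) 1 * Real.log (max ((r:ℝ)/s) (Real.exp 1)) ≤
        -Real.log (∑' x : {x : ℤ // r ≤ x}, q x.1) ∧
      -Real.log (∑' x : {x : ℤ // r ≤ x}, q x.1) ≤
        C * (r:ℝ) * min ((r:ℝ)/s) 1 * Real.log (max ((r:ℝ)/s) (Real.exp 1))) ∧
    (c * max (s/(r:ℝ)) 1 ≤ (∑' x : {x : ℤ // r ≤ x}, q x.1) / q r ∧
      (∑' x : {x : ℤ // r ≤ x}, q x.1) / q r ≤ C * max (s/(r:ℝ)) 1) := by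
  refine ⟨exp (-4), 10, exp_pos _, by norm_num, ?_⟩
  intro s r hs0 hr
  have hr0 : (0:ℝ) < r := (Real.sqrt_pos.mpr hs0).trans_le hr
  have hrz : 0 < r := by exact_mod_cast hr0
  obtain ⟨n, rfl⟩ : ∃ n : ℕ, r = n := ⟨r.toNat, by omega⟩
  have hn : 1 ≤ n := by omega
  obtain ⟨t, rfl⟩ : ∃ t, s = 2 * t := ⟨s / 2, by ring⟩
  have ht : 0 < t := by linarith
  intro q
  have hq : ∀ x : ℤ, q x = exp (-(2 * t)) * SRWTail.bI t x.natAbs := by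
    intro x
    have := SRWTail.q_eq (2 * t) x.natAbs
    rwa [mul_div_cancel_left₀ t (by norm_num : (2:ℝ) ≠ 0)] at this
  have hT : ∑' x : {x : ℤ // (n : ℤ) ≤ x}, q x.1 =
      exp (-(2 * t)) * ∑' k, SRWTail.bI t (n + k) := by
    rw [tsum_congr (fun x : {x : ℤ // (n : ℤ) ≤ x} => hq x.1), tsum_mul_left, SRWTail.tail_eq]
  have hqn : q n = exp (-(2 * t)) * SRWTail.bI t n := by rw [hq]; simp
  rw [hT, hqn]
  simp only [Int.cast_natCast] at hr hr0 ⊢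
  have hs : 2 * t ≤ (n : ℝ) ^ 2 := (Real.sqrt_le_left hr0.le).mp hr
  have hTp := SRWTail.tail_pos ht n
  have hIp := SRWTail.bI_pos ht n
  have hR1 := SRWTail.ratio_lower ht n hn hs
  have hR2 := SRWTail.ratio_upper ht n hn
  rw [mul_div_mul_left _ _ (exp_pos _).ne', Real.log_mul (exp_pos _).ne' hTp.ne', Real.log_exp,
    le_div_iff₀ hIp, div_le_iff₀ hIp]
  have hc : exp (-4) ≤ 1 / 10 := by
    have h1 : (10:ℝ) ≤ exp 4 := by
      have h2 := Real.exp_one_gt_d9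
      have h3 : exp 4 = exp 1 ^ 4 := by rw [← Real.exp_nat_mul]; norm_num
      rw [h3]
      have h4 : (2:ℝ) ^ 4 ≤ exp 1 ^ 4 := pow_le_pow_left₀ (by norm_num) (by linarith) 4
      linarith
    rw [Real.exp_neg, one_div]
    exact inv_anti₀ (by norm_num) h1
  have hL : 1 ≤ log (max (n / (2 * t)) (exp 1)) := by
    have := Real.log_le_log (exp_pos 1) (le_max_right ((n : ℝ) / (2 * t)) (exp 1))
    rwa [Real.log_exp] at this
  refine ⟨?_, hR1, hR2.trans ?_⟩
  · rw [neg_add, neg_neg, ← sub_eq_add_neg]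
    rcases le_total (n : ℝ) (2 * t) with h | h
    · have h1 := SRWTail.log_lower_small ht n h
      have h2 := SRWTail.log_upper_small ht n hn hs
      have e1 : (n : ℝ) / (2 * t) ≤ 1 := (div_le_one hs0).mpr h
      have e2 : max ((n : ℝ) / (2 * t)) (exp 1) = exp 1 :=
        max_eq_right (e1.trans (Real.one_le_exp zero_le_one))
      have e3 : ∀ c : ℝ, c * n * (n / (2 * t)) * 1 = c * ((n : ℝ) ^ 2 / (2 * t)) := by intro c; ring
      rw [e2, Real.log_exp, min_eq_left e1, e3, e3]
      refine ⟨le_trans ?_ h1, h2⟩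
      exact mul_le_mul_of_nonneg_right hc (by positivity)
    · have h1 := SRWTail.log_lower_large ht n h
      have h2 := SRWTail.log_upper_large ht n hn h
      have e1 : 1 ≤ (n : ℝ) / (2 * t) := (one_le_div hs0).mpr h
      rw [min_eq_right e1, mul_one, mul_one, mul_assoc, mul_assoc]
      refine ⟨le_trans ?_ h1, h2⟩
      exact mul_le_mul_of_nonneg_right hc (mul_nonneg hr0.le (by linarith))
  · refine mul_le_mul_of_nonneg_right ?_ hIp.le
    refine mul_le_mul_of_nonneg_right (by norm_num) ?_
    exact zero_le_one.trans (le_max_right _ _)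
end

section
/- For s > 0 let p_s : ℕ → ℝ be the Poisson probability mass function p_s(x) = e^{−s}·s^x/x!, let H(s) = −Σ_{x=0}^∞ p_s(x)·log p_s(x), and let V(s) = Σ_{x=0}^∞ p_s(x)·( −log p_s(x) − H(s) )² be the variance of the information −log p_s(X_s) for X_s Poisson with mean s. There exist constants C > 0 and s₀ ≥ e such that for all s ≥ s₀, |V(s) − 1/2| ≤ C·s^{−1/4}·log s. -/
open Real

namespace PoissonAux

/-- the Poisson weight -/
noncomputable def pw (s : ℝ) (x : ℕ) : ℝ := Real.exp (-s) * s ^ x / (Nat.factorial x : ℝ)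

lemma hs_congr {f g : ℕ → ℝ} {a b : ℝ} (h : HasSum f a) (hf : ∀ x, g x = f x) (hb : b = a) :
    HasSum g b := by
  have : g = f := funext hf
  rw [this, hb]; exact h

lemma pw_pos {s : ℝ} (hs : 0 < s) (x : ℕ) : 0 < pw s x := by
  unfold pw; positivity

lemma pw_succ (s : ℝ) (x : ℕ) : pw s (x + 1) * ((x : ℝ) + 1) = s * pw s x := by
  unfold pw
  rw [Nat.factorial_succ]
  have : (Nat.factorial x : ℝ) ≠ 0 := by positivity
  have h1 : (x : ℝ) + 1 ≠ 0 := by positivity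
  push_cast
  field_simp
  ring

lemma hasSum_pw (s : ℝ) : HasSum (pw s) 1 := by
  have h : HasSum (fun x : ℕ => s ^ x / (Nat.factorial x : ℝ)) (Real.exp s) := by
    have := NormedSpace.expSeries_div_hasSum_exp s
    rwa [← Real.exp_eq_exp_ℝ] at this
  have h2 := h.mul_left (Real.exp (-s))
  rw [← Real.exp_add] at h2
  simp only [neg_add_cancel, Real.exp_zero] at h2
  refine h2.congr_fun ?_ |> fun h => h
  intro x
  unfold pw
  ring

lemma shift {s : ℝ} {f : ℕ → ℝ} {a : ℝ} (h : HasSum (fun x => pw s x * f (x + 1)) a) :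
    HasSum (fun x : ℕ => pw s x * (x * f x)) (s * a) := by
  have h2 : HasSum (fun x : ℕ => pw s (x + 1) * (((x + 1 : ℕ) : ℝ) * f (x + 1))) (s * a) := by
    have h3 := h.mul_left s
    have e : (fun x : ℕ => pw s (x + 1) * (((x + 1 : ℕ) : ℝ) * f (x + 1)))
        = fun x => s * (pw s x * f (x + 1)) := by
      funext x
      have := pw_succ s x
      push_cast
      rw [← mul_assoc, this]; ring
    rw [e]; exact h3
  have := (hasSum_nat_add_iff (f := fun x : ℕ => pw s x * (x * f x)) 1).1 h2
  simpa using this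

lemma m1 (s : ℝ) : HasSum (fun x : ℕ => pw s x * (x : ℝ)) s := by
  have := shift (s := s) (f := fun _ => 1) (a := 1) (by simpa using hasSum_pw s)
  simpa using this

lemma fm (s : ℝ) (k : ℕ) :
    HasSum (fun x : ℕ => pw s x * (∏ i ∈ Finset.range k, ((x : ℝ) - i))) (s ^ k) := by
  induction k with
  | zero => simpa using hasSum_pw s
  | succ k ih =>
    have := shift (s := s) (f := fun x => ∏ i ∈ Finset.range k, ((x : ℝ) - (i + 1)))
      (a := s ^ k) (by
        convert ih using 4
        push_cast; ring)
    rw [pow_succ']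
    convert this using 3
    rw [Finset.prod_range_succ']
    push_cast
    ring

lemma c2 (s : ℝ) : HasSum (fun x : ℕ => pw s x * ((x : ℝ) - s) ^ 2) s := by
  have h := (fm s 2).add (((fm s 1).mul_left (1 - 2 * s)).add ((fm s 0).mul_left (s ^ 2)))
  simp only [Finset.prod_range_succ, Finset.prod_range_zero] at h
  push_cast at h
  convert h using 1
  · funext x; ring
  · ring

lemma c4 (s : ℝ) : HasSum (fun x : ℕ => pw s x * ((x : ℝ) - s) ^ 4) (3 * s ^ 2 + s) := by
  have h := (fm s 4).add (((fm s 3).mul_left (6 - 4 * s)).add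
    (((fm s 2).mul_left (7 - 12 * s + 6 * s ^ 2)).add
    (((fm s 1).mul_left (1 - 4 * s + 6 * s ^ 2 - 4 * s ^ 3)).add ((fm s 0).mul_left (s ^ 4)))))
  simp only [Finset.prod_range_succ, Finset.prod_range_zero] at h
  push_cast at h
  convert h using 1
  · funext x; ring
  · ring

lemma c6 (s : ℝ) : HasSum (fun x : ℕ => pw s x * ((x : ℝ) - s) ^ 6)
    (15 * s ^ 3 + 25 * s ^ 2 + s) := by
  have h := (fm s 6).add (((fm s 5).mul_left (15 - 6 * s)).add
    (((fm s 4).mul_left (65 - 6 * s * 10 + 15 * s ^ 2)).add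
    (((fm s 3).mul_left (90 - 6 * s * 25 + 15 * s ^ 2 * 6 - 20 * s ^ 3)).add
    (((fm s 2).mul_left (31 - 6 * s * 15 + 15 * s ^ 2 * 7 - 20 * s ^ 3 * 3 + 15 * s ^ 4)).add
    (((fm s 1).mul_left (1 - 6 * s + 15 * s ^ 2 - 20 * s ^ 3 + 15 * s ^ 4 - 6 * s ^ 5)).add
      ((fm s 0).mul_left (s ^ 6)))))))
  simp only [Finset.prod_range_succ, Finset.prod_range_zero] at h
  push_cast at h
  convert h using 1
  · funext x; ring
  · ring

/-- the remainder -/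
noncomputable def R (s : ℝ) (x : ℕ) : ℝ := -Real.log (pw s x) - ((x : ℝ) - s) ^ 2 / (2 * s)

lemma R_succ {s : ℝ} (hs : 0 < s) (k : ℕ) :
    R s (k + 1) - R s k = Real.log (((k : ℝ) + 1) / s) - ((k : ℝ) + 1 - s) / s + 1 / (2 * s) := by
  have h := pw_succ s k
  have h1 : (0 : ℝ) < (k : ℝ) + 1 := by positivity
  have h2 := congrArg Real.log h
  rw [Real.log_mul (pw_pos hs _).ne' h1.ne', Real.log_mul hs.ne' (pw_pos hs _).ne'] at h2
  rw [Real.log_div h1.ne' hs.ne']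
  unfold R
  have h3 : Real.log (pw s (k + 1)) = Real.log s + Real.log (pw s k) - Real.log ((k : ℝ) + 1) := by
    linarith
  rw [h3]
  push_cast
  field_simp
  ring

lemma R_step {s : ℝ} (hs : 0 < s) (k : ℕ) :
    |R s (k + 1) - R s k| ≤ ((k : ℝ) + 1 - s) ^ 2 / s ^ 2 * (s / ((k : ℝ) + 1)) + 1 / (2 * s) := by
  rw [R_succ hs]
  have h1 : (0 : ℝ) < (k : ℝ) + 1 := by positivity
  have hq : 0 < ((k : ℝ) + 1) / s := by positivity
  have hu := Real.log_le_sub_one_of_pos hq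
  have hl := Real.one_sub_inv_le_log_of_pos hq
  have e1 : ((k : ℝ) + 1 - s) / s = ((k : ℝ) + 1) / s - 1 := by field_simp
  have e2 : ((k : ℝ) + 1 - s) ^ 2 / s ^ 2 * (s / ((k : ℝ) + 1))
      = ((k : ℝ) + 1) / s - 1 - (1 - (((k : ℝ) + 1) / s)⁻¹) := by field_simp
  have h3 : 0 < 1 / (2 * s) := by positivity
  have h4 : 0 ≤ ((k : ℝ) + 1 - s) ^ 2 / s ^ 2 * (s / ((k : ℝ) + 1)) := by positivity
  rw [abs_le]
  constructor
  · rw [e2, e1]; linarith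
  · rw [e1]; linarith

lemma tele (f : ℕ → ℝ) (M : ℝ) (a b : ℕ) (hab : a ≤ b)
    (h : ∀ k, a ≤ k → k < b → |f (k + 1) - f k| ≤ M) : |f b - f a| ≤ ((b : ℝ) - a) * M := by
  induction b, hab using Nat.le_induction with
  | base => simp
  | succ n hn ih =>
    have h1 := ih (fun k hk hk2 => h k hk (by omega))
    have h2 := h n hn (by omega)
    have h3 := abs_add_le (f (n + 1) - f n) (f n - f a)
    have e : f (n + 1) - f n + (f n - f a) = f (n + 1) - f a := by ring
    rw [e] at h3
    push_cast
    linarith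

lemma G_bound {s : ℝ} (hs : 1 ≤ s) (x : ℕ) :
    |R s x - R s ⌊s⌋₊| ≤ (|(x : ℝ) - s| + 1) *
      (((x : ℝ) - s) ^ 2 / s ^ 2 * (1 + s / ((x : ℝ) + 1)) + 1 / (2 * s)) := by
  have hs0 : 0 < s := by linarith
  have f1 : (⌊s⌋₊ : ℝ) ≤ s := Nat.floor_le hs0.le
  have f2 : s < (⌊s⌋₊ : ℝ) + 1 := Nat.lt_floor_add_one s
  set M := ((x : ℝ) - s) ^ 2 / s ^ 2 * (1 + s / ((x : ℝ) + 1)) + 1 / (2 * s) with hM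
  have hM0 : 0 ≤ M := by positivity
  have hx0 : (0 : ℝ) < (x : ℝ) + 1 := by positivity
  rcases le_total ⌊s⌋₊ x with hx | hx
  · have := tele (R s) M _ _ hx (by
      intro k hk hk2
      refine (R_step hs0 k).trans ?_
      have hk' : (⌊s⌋₊ : ℝ) ≤ k := by exact_mod_cast hk
      have hk2' : (k : ℝ) + 1 ≤ x := by exact_mod_cast hk2
      rw [hM]
      have a1 : ((k : ℝ) + 1 - s) ^ 2 ≤ ((x : ℝ) - s) ^ 2 := by
        apply pow_le_pow_left₀ <;> linarith
      have a2 : s / ((k : ℝ) + 1) ≤ 1 + s / ((x : ℝ) + 1) := by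
        have : s / ((k : ℝ) + 1) ≤ 1 := by rw [div_le_one (by positivity)]; linarith
        have : 0 ≤ s / ((x : ℝ) + 1) := by positivity
        linarith
      gcongr)
    refine this.trans ?_
    gcongr
    have := le_abs_self ((x : ℝ) - s)
    linarith
  · rw [abs_sub_comm]
    have := tele (R s) M _ _ hx (by
      intro k hk hk2
      refine (R_step hs0 k).trans ?_
      have hk' : (x : ℝ) ≤ k := by exact_mod_cast hk
      have hk2' : (k : ℝ) + 1 ≤ ⌊s⌋₊ := by exact_mod_cast hk2
      rw [hM]
      have a1 : ((k : ℝ) + 1 - s) ^ 2 ≤ ((x : ℝ) - s) ^ 2 := by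
        have := pow_le_pow_left₀ (show 0 ≤ s - ((k : ℝ) + 1) by linarith)
          (show s - ((k : ℝ) + 1) ≤ s - x by linarith) 2
        nlinarith
      have a2 : s / ((k : ℝ) + 1) ≤ 1 + s / ((x : ℝ) + 1) := by
        have : s / ((k : ℝ) + 1) ≤ s / ((x : ℝ) + 1) := by gcongr
        linarith
      gcongr)
    refine this.trans ?_
    gcongr
    have := neg_abs_le ((x : ℝ) - s)
    linarith

lemma G_sq {s : ℝ} (hs : 1 ≤ s) (x : ℕ) :
    (R s x - R s ⌊s⌋₊) ^ 2 ≤ 8 / s ^ 4 * (2 * ((x : ℝ) - s) ^ 6 + 1)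
      + 16 / s ^ 4 * ((2 * ((x : ℝ) - s) ^ 6 + 1) * (s ^ 2 / (((x : ℝ) + 1) * ((x : ℝ) + 2))))
      + 1 / s ^ 2 * (((x : ℝ) - s) ^ 2 + 1) := by
  have hs0 : 0 < s := by linarith
  have h := G_bound hs x
  have hx0 : (0 : ℝ) ≤ x := by positivity
  have h2 := pow_le_pow_left₀ (abs_nonneg _) h 2
  rw [sq_abs, mul_pow] at h2
  refine h2.trans ?_
  set d := (x : ℝ) - s
  have b1 : (|d| + 1) ^ 2 ≤ 2 * (d ^ 2 + 1) := by
    have := sq_abs d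
    nlinarith [sq_nonneg (|d| - 1)]
  set r := s / ((x : ℝ) + 1) with hr
  have b2 : (d ^ 2 / s ^ 2 * (1 + r) + 1 / (2 * s)) ^ 2
      ≤ 4 * (d ^ 4 / s ^ 4) * (1 + r ^ 2) + 1 / (2 * s ^ 2) := by
    have e1 : (d ^ 2 / s ^ 2 * (1 + r) + 1 / (2 * s)) ^ 2
      ≤ 2 * (d ^ 2 / s ^ 2 * (1 + r)) ^ 2 + 2 * (1 / (2 * s)) ^ 2 := by
      nlinarith [sq_nonneg (d ^ 2 / s ^ 2 * (1 + r) - 1 / (2 * s))]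
    have e2 : (d ^ 2 / s ^ 2 * (1 + r)) ^ 2 = d ^ 4 / s ^ 4 * (1 + r) ^ 2 := by
      field_simp
    have e3 : 2 * (1 / (2 * s)) ^ 2 = 1 / (2 * s ^ 2) := by field_simp
    have e4 : d ^ 4 / s ^ 4 * (1 + r) ^ 2 ≤ d ^ 4 / s ^ 4 * (2 * (1 + r ^ 2)) := by
      apply mul_le_mul_of_nonneg_left _ (by positivity)
      nlinarith [sq_nonneg (r - 1)]
    rw [e2, e3] at e1
    linarith
  have b3 : r ^ 2 ≤ 2 * (s ^ 2 / (((x : ℝ) + 1) * ((x : ℝ) + 2))) := by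
    rw [hr, div_pow, ← mul_div_assoc, div_le_div_iff₀ (by positivity) (by positivity)]
    have : ((x : ℝ) + 1) * ((x : ℝ) + 2) ≤ 2 * ((x : ℝ) + 1) ^ 2 := by nlinarith
    nlinarith [mul_le_mul_of_nonneg_left this (sq_nonneg s)]
  set w := s ^ 2 / (((x : ℝ) + 1) * ((x : ℝ) + 2))
  have hw : 0 ≤ w := by positivity
  have b4 : d ^ 6 + d ^ 4 ≤ 2 * d ^ 6 + 1 := by
    have : 0 ≤ d ^ 2 := sq_nonneg d
    rcases le_total (d ^ 2) 1 with h | h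
    · nlinarith [pow_le_one₀ (n := 2) this h, pow_nonneg this 3]
    · nlinarith [pow_le_pow_right₀ h (show 2 ≤ 3 by norm_num)]
  calc _ ≤ 2 * (d ^ 2 + 1) * (4 * (d ^ 4 / s ^ 4) * (1 + r ^ 2) + 1 / (2 * s ^ 2)) := by
        gcongr
    _ = 8 / s ^ 4 * ((d ^ 6 + d ^ 4) * (1 + r ^ 2)) + 1 / s ^ 2 * (d ^ 2 + 1) := by
        field_simp
        ring
    _ ≤ 8 / s ^ 4 * ((2 * d ^ 6 + 1) * (1 + 2 * w)) + 1 / s ^ 2 * (d ^ 2 + 1) := by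
        have : 0 ≤ d ^ 6 := by positivity
        gcongr
    _ = _ := by ring

lemma shifted_sum {s : ℝ} (hs : 1 ≤ s) : ∃ a, a ≤ 6721 * s ^ 3 ∧
    HasSum (fun x : ℕ => pw s x *
      ((2 * ((x : ℝ) - s) ^ 6 + 1) * (s ^ 2 / (((x : ℝ) + 1) * ((x : ℝ) + 2))))) a := by
  have hs0 : 0 < s := by linarith
  let q : ℕ → ℝ := fun y => pw s y * (2 * ((y : ℝ) - 2 - s) ^ 6 + 1)
  have hq0 : ∀ y, 0 ≤ q y := fun y => by
    have := (pw_pos hs0 y).le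
    have : 0 ≤ ((y : ℝ) - 2 - s) ^ 6 := by positivity
    positivity
  have hb := ((c6 s).mul_left 64).add ((hasSum_pw s).mul_left 4097)
  have hle : ∀ y, q y ≤ 64 * (pw s y * ((y : ℝ) - s) ^ 6) + 4097 * pw s y := fun y => by
    have hp := (pw_pos hs0 y).le
    have : ((y : ℝ) - 2 - s) ^ 6 ≤ 32 * (((y : ℝ) - s) ^ 6 + 64) := by
      have h := Even.add_pow_le (n := 6) (a := (y : ℝ) - s) (b := -2) (by decide)
      norm_num at h
      calc _ = ((y : ℝ) - s + -2) ^ 6 := by ring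
        _ ≤ _ := h
    have := mul_le_mul_of_nonneg_left this hp
    simp only [q]
    nlinarith
  have hsum : Summable q := Summable.of_nonneg_of_le hq0 hle hb.summable
  have htot : ∑' y, q y ≤ 6721 * s ^ 3 := by
    have := hasSum_le hle hsum.hasSum hb
    have : (1 : ℝ) ≤ s ^ 3 := one_le_pow₀ hs
    have : s ^ 2 ≤ s ^ 3 := pow_le_pow_right₀ hs (by norm_num)
    have : s ≤ s ^ 3 := by simpa using pow_le_pow_right₀ hs (show 1 ≤ 3 by norm_num)
    linarith
  have hsh : Summable (fun x => q (x + 2)) := (summable_nat_add_iff 2).2 hsum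
  refine ⟨∑' x, q (x + 2), ?_, ?_⟩
  · have := hsum.sum_add_tsum_nat_add 2
    have h2 : 0 ≤ ∑ i ∈ Finset.range 2, q i := Finset.sum_nonneg (fun i _ => hq0 i)
    linarith
  · convert hsh.hasSum using 2 with x
    have p1 := pw_succ s x
    have p2 := pw_succ s (x + 1)
    simp only [q]
    push_cast at p2 ⊢
    have e : pw s (x + 2) * (((x : ℝ) + 1) * ((x : ℝ) + 2)) = s ^ 2 * pw s x := by
      rw [show x + 2 = x + 1 + 1 from rfl]
      linear_combination ((x : ℝ) + 1) * p2 + s * p1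
    have e' : pw s (x + 2) = s ^ 2 * pw s x / (((x : ℝ) + 1) * ((x : ℝ) + 2)) := by
      rw [eq_div_iff (by positivity), e]
    rw [e']
    ring

lemma EG {s : ℝ} (hs : 1 ≤ s) : ∃ a, a ≤ 200000 / s ∧
    HasSum (fun x : ℕ => pw s x * (R s x - R s ⌊s⌋₊) ^ 2) a := by
  have hs0 : 0 < s := by linarith
  obtain ⟨a, ha, hsum⟩ := shifted_sum hs
  have hb := (((((c6 s).mul_left 2).add (hasSum_pw s)).mul_left (8 / s ^ 4)).add
    (hsum.mul_left (16 / s ^ 4))).add (((c2 s).add (hasSum_pw s)).mul_left (1 / s ^ 2))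
  have hle : ∀ x : ℕ, pw s x * (R s x - R s ⌊s⌋₊) ^ 2 ≤ _ := fun x =>
    (mul_le_mul_of_nonneg_left (G_sq hs x) (pw_pos hs0 x).le).trans_eq
     (show _ = 8 / s ^ 4 * (2 * (pw s x * ((x : ℝ) - s) ^ 6) + pw s x) + 16 / s ^ 4 * (pw s x *
      ((2 * ((x : ℝ) - s) ^ 6 + 1) * (s ^ 2 / (((x : ℝ) + 1) * ((x : ℝ) + 2)))))
      + 1 / s ^ 2 * (pw s x * ((x : ℝ) - s) ^ 2 + pw s x) by ring)
  have hS : Summable (fun x : ℕ => pw s x * (R s x - R s ⌊s⌋₊) ^ 2) :=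
    Summable.of_nonneg_of_le (fun x => mul_nonneg (pw_pos hs0 x).le (sq_nonneg _)) hle hb.summable
  refine ⟨_, ?_, hS.hasSum⟩
  refine (hasSum_le hle hS.hasSum hb).trans ?_
  have h1 : (1 : ℝ) ≤ s ^ 3 := one_le_pow₀ hs
  have h2 : s ^ 2 ≤ s ^ 3 := pow_le_pow_right₀ hs (by norm_num)
  have h3 : s ≤ s ^ 3 := by simpa using pow_le_pow_right₀ hs (show 1 ≤ 3 by norm_num)
  have k1 : 8 / s ^ 4 * (2 * (15 * s ^ 3 + 25 * s ^ 2 + s) + 1) ≤ 8 / s ^ 4 * (83 * s ^ 3) := by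
    gcongr; linarith
  have k2 : 16 / s ^ 4 * a ≤ 16 / s ^ 4 * (6721 * s ^ 3) := by gcongr
  have k3 : 1 / s ^ 2 * (s + 1) ≤ 1 / s ^ 2 * (2 * s) := by gcongr; linarith
  have e : 8 / s ^ 4 * (83 * s ^ 3) + 16 / s ^ 4 * (6721 * s ^ 3) + 1 / s ^ 2 * (2 * s)
      = 108202 / s := by field_simp; norm_num
  have : 108202 / s ≤ 200000 / s := by gcongr; norm_num
  linarith

lemma summable_first {w f : ℕ → ℝ} (hw : ∀ x, 0 ≤ w x) (h1 : Summable w)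
    (h2 : Summable fun x => w x * f x ^ 2) : Summable fun x => w x * f x := by
  refine Summable.of_norm_bounded (g := fun x => w x + w x * f x ^ 2) (h1.add h2) ?_
  intro x
  rw [norm_mul, Real.norm_eq_abs, Real.norm_eq_abs, abs_of_nonneg (hw x)]
  have : |f x| ≤ 1 + f x ^ 2 := by
    rw [← sq_abs]; nlinarith [sq_nonneg (|f x| - 1), abs_nonneg (f x)]
  nlinarith [mul_le_mul_of_nonneg_left this (hw x)]

/-- Perturbation of the variance. -/
lemma var_pert {w Q G g : ℕ → ℝ} {c mQ mQ2 mG2 t : ℝ} (hw : ∀ x, 0 ≤ w x) (h1 : HasSum w 1)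
    (hQ : HasSum (fun x => w x * Q x) mQ) (hQ2 : HasSum (fun x => w x * Q x ^ 2) mQ2)
    (hG2 : HasSum (fun x => w x * G x ^ 2) mG2) (hg : ∀ x, g x = c + Q x + G x) (ht : 0 < t) :
    |(∑' x, w x * (g x - ∑' y, w y * g y) ^ 2) - (mQ2 - mQ ^ 2)|
      ≤ t * (mQ2 - mQ ^ 2) + (1 + 1 / t) * mG2 := by
  obtain ⟨mG, hG⟩ := summable_first hw h1.summable hG2.summable
  have hgm : HasSum (fun x => w x * g x) (c + mQ + mG) := by
    refine hs_congr (((h1.mul_left c).add hQ).add hG) ?_ ?_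
    · intro x; rw [hg]; ring
    · ring
  rw [hgm.tsum_eq]
  have hA : HasSum (fun x => w x * (Q x - mQ) ^ 2) (mQ2 - mQ ^ 2) := by
    convert (hQ2.add (hQ.mul_left (-2 * mQ))).add (h1.mul_left (mQ ^ 2)) using 1
    · funext x; ring
    · ring
  have hB : HasSum (fun x => w x * (G x - mG) ^ 2) (mG2 - mG ^ 2) := by
    convert (hG2.add (hG.mul_left (-2 * mG))).add (h1.mul_left (mG ^ 2)) using 1
    · funext x; ring
    · ring
  have hbd := (hA.mul_left t).add (hB.mul_left (1 + 1 / t))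
  have hpt : ∀ x, ‖w x * (g x - (c + mQ + mG)) ^ 2 - w x * (Q x - mQ) ^ 2‖
      ≤ t * (w x * (Q x - mQ) ^ 2) + (1 + 1 / t) * (w x * (G x - mG) ^ 2) := by
    intro x
    rw [hg]
    set a := Q x - mQ with ha
    set b := G x - mG with hb
    have e : w x * (c + Q x + G x - (c + mQ + mG)) ^ 2 - w x * a ^ 2
        = w x * (2 * (a * b) + b ^ 2) := by rw [ha, hb]; ring
    rw [e, norm_mul, Real.norm_eq_abs, Real.norm_eq_abs, abs_of_nonneg (hw x)]
    have k1 : 0 ≤ t * a ^ 2 + 1 / t * b ^ 2 - 2 * (a * b) := by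
      have : t * a ^ 2 + 1 / t * b ^ 2 - 2 * (a * b) = (t * a - b) ^ 2 / t := by
        field_simp; ring
      rw [this]; positivity
    have k2 : 0 ≤ t * a ^ 2 + 1 / t * b ^ 2 + 2 * (a * b) := by
      have : t * a ^ 2 + 1 / t * b ^ 2 + 2 * (a * b) = (t * a + b) ^ 2 / t := by
        field_simp; ring
      rw [this]; positivity
    have k3 : |2 * (a * b) + b ^ 2| ≤ t * a ^ 2 + (1 + 1 / t) * b ^ 2 := by
      rw [abs_le]; constructor <;> nlinarith [sq_nonneg b]
    nlinarith [mul_le_mul_of_nonneg_left k3 (hw x)]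
  have hdS : Summable (fun x => w x * (g x - (c + mQ + mG)) ^ 2 - w x * (Q x - mQ) ^ 2) :=
    Summable.of_norm_bounded hbd.summable hpt
  have hgS : Summable (fun x => w x * (g x - (c + mQ + mG)) ^ 2) := by
    convert hdS.add hA.summable using 1
    funext x; ring
  have hfin := tsum_of_norm_bounded hbd hpt
  rw [hgS.tsum_sub hA.summable, hA.tsum_eq, Real.norm_eq_abs] at hfin
  refine hfin.trans ?_
  have : (1 + 1 / t) * (mG2 - mG ^ 2) ≤ (1 + 1 / t) * mG2 := by
    gcongr; nlinarith [sq_nonneg mG]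
  linarith

end PoissonAux

open PoissonAux in
/-- Large-time asymptotic of the variance of the Poisson information: with
`p_s` the Poisson(s) pmf, `H(s)` its entropy and
`V(s) = ∑_x p_s(x)·(-log p_s(x) - H(s))²` the variance of `-log p_s(X_s)`,
there are constants `C > 0` and `s₀ ≥ e` such that `|V(s) - 1/2| ≤ C·s^{-1/4}·log s`
for all `s ≥ s₀`. -/
theorem poisson_information_variance_large_time : ∃ C s₀ : ℝ, 0 < C ∧ Real.exp 1 ≤ s₀ ∧
    ∀ s : ℝ, s₀ ≤ s →
      let p : ℕ → ℝ := fun x => Real.exp (-s) * s ^ x / (Nat.factorial x : ℝ)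
      let H : ℝ := -∑' x : ℕ, p x * Real.log (p x)
      |(∑' x : ℕ, p x * (-Real.log (p x) - H)^2) - 1/2| ≤
        C * s ^ (-(1/4 : ℝ)) * Real.log s := by
  refine ⟨400002, Real.exp 1, by norm_num, le_rfl, ?_⟩
  intro s hs
  have hs1 : 1 ≤ s := le_trans (Real.one_le_exp (by norm_num)) hs
  have hs0 : 0 < s := by linarith
  have hlog : 1 ≤ Real.log s := by rwa [Real.le_log_iff_exp_le hs0]
  obtain ⟨a, ha, hG⟩ := EG hs1
  set t := s ^ (-(1 / 2 : ℝ)) with htdef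
  have ht : 0 < t := Real.rpow_pos_of_pos hs0 _
  have ht1 : t ≤ 1 := Real.rpow_le_one_of_one_le_of_nonpos hs1 (by norm_num)
  have htt : t * t = 1 / s := by
    rw [htdef, ← Real.rpow_add hs0]
    norm_num
    rw [Real.rpow_neg_one]
  have ht4 : t ≤ s ^ (-(1 / 4 : ℝ)) := Real.rpow_le_rpow_of_exponent_le hs1 (by norm_num)
  have hQ : HasSum (fun x : ℕ => pw s x * (((x : ℝ) - s) ^ 2 / (2 * s))) (1 / 2) := by
    refine hs_congr ((c2 s).mul_left (1 / (2 * s))) ?_ ?_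
    · intro x; ring
    · field_simp
  have hQ2 : HasSum (fun x : ℕ => pw s x * (((x : ℝ) - s) ^ 2 / (2 * s)) ^ 2)
      (3 / 4 + 1 / (4 * s)) := by
    refine hs_congr ((c4 s).mul_left (1 / (4 * s ^ 2))) ?_ ?_
    · intro x; field_simp; ring
    · field_simp
  have key := var_pert (g := fun x => -Real.log (pw s x)) (c := R s ⌊s⌋₊)
    (fun x => (pw_pos hs0 x).le) (hasSum_pw s) hQ hQ2 hG
    (fun x => by unfold R; ring) ht
  intro p H
  have hH : ∑' y, pw s y * -Real.log (pw s y) = H := by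
    simp only [H, mul_neg, tsum_neg]
    rfl
  rw [hH] at key
  change |(∑' x : ℕ, pw s x * (-Real.log (pw s x) - H)^2) - 1/2| ≤ _
  set V := ∑' x : ℕ, pw s x * (-Real.log (pw s x) - H)^2
  have e1 : (3 / 4 + 1 / (4 * s) - (1 / 2) ^ 2 : ℝ) = 1 / 2 + t * t / 4 := by
    rw [htt]; field_simp; ring
  rw [e1] at key
  have ha' : a ≤ 200000 * (t * t) := by rw [htt]; linarith [ha, mul_one_div (200000 : ℝ) s]
  have e2 : (1 + 1 / t) * a ≤ 400000 * t := by
    calc (1 + 1 / t) * a ≤ (1 + 1 / t) * (200000 * (t * t)) := by gcongr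
      _ = 200000 * (t * t) + 200000 * t := by field_simp
      _ ≤ _ := by nlinarith
  have e3 : t * t ≤ t := by nlinarith
  have e4 : t * (1 / 2 + t * t / 4) ≤ t := by nlinarith
  have hV : |V - 1 / 2| ≤ 400002 * t := by
    rw [abs_le] at key ⊢
    constructor <;> nlinarith [key.1, key.2, mul_pos ht ht]
  calc _ ≤ 400002 * t := hV
    _ ≤ 400002 * s ^ (-(1 / 4 : ℝ)) * 1 := by rw [mul_one]; gcongr
    _ ≤ _ := by gcongr
end
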